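/- arXiv:1507.08254 — 2 statements merged into one kernel-verified Lean document; each statement's English description precedes it below -/
import Mathlib

section
/- Let Ψ ∈ ℝ^{m×d} satisfy the restricted isometry property of order 2k with constant δ ∈ [0,1]. Then for any pair of k×k-sparse matrices X, X' ∈ ℝ^{d×d} with disjoint supports (i.e., no index (i,j) carries a nonzero entry of both), one has |⟨Ψ X Ψᵀ, Ψ X' Ψᵀ⟩| ≤ 2δ ‖X‖_F ‖X'‖_F. -/
/-!
The squared Frobenius norm is a sum over columns, and also over rows. If `Z` is supported on
`A × B` with `|A|, |B| ≤ 2k`, then the columns of `Z` are supported on `A` and the rows of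
`Ψ Z` on `B`, so applying the restricted isometry property twice (`RIP.sandwich`) gives
`(1-δ)² ‖Z‖² ≤ ‖Ψ Z Ψᵀ‖² ≤ (1+δ)² ‖Z‖²`.

For `X`, `X'` of Frobenius norms `a`, `b`, apply this to `Z = b X ± a X'`, which is supported on
`(S ∪ S') × (T ∪ T')`. Disjointness of supports gives `‖Z‖² = 2a²b²`, and polarization yields
`4ab |⟨Ψ X Ψᵀ, Ψ X' Ψᵀ⟩| ≤ ((1+δ)² - (1-δ)²) · 2a²b² = 8δa²b²`.
Rescaling by `a` and `b`, and bounding `Ψ Z Ψᵀ` as a whole, is what gives the constant `2δ`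
rather than `2δ + δ²`.
-/

open Matrix

noncomputable section

/-- The Euclidean (`ℓ₂`) norm of a vector in `ℝ^n`. -/
def l2Norm {n : ℕ} (x : Fin n → ℝ) : ℝ := Real.sqrt (∑ i, (x i) ^ 2)

/-- The Frobenius norm of a real matrix. -/
def frobNorm {m n : ℕ} (M : Matrix (Fin m) (Fin n) ℝ) : ℝ :=
  Real.sqrt (∑ i, ∑ j, (M i j) ^ 2)

/-- The trace inner product `⟨A, B⟩ = trace(Aᵀ B)` of two real matrices. -/
def tip {m n : ℕ} (A B : Matrix (Fin m) (Fin n) ℝ) : ℝ := (Aᵀ * B).trace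

/-- A vector `x ∈ ℝ^d` is `k`-sparse: it has at most `k` nonzero entries. -/
def SparseVec {d : ℕ} (k : ℕ) (x : Fin d → ℝ) : Prop :=
  ∃ s : Finset (Fin d), s.card ≤ k ∧ ∀ i, x i ≠ 0 → i ∈ s

/-- A matrix `X ∈ ℝ^{d×d}` is `k×k`-sparse: all of its nonzero entries lie in a submatrix
indexed by `S×T` with `|S| ≤ k` and `|T| ≤ k`. -/
def SparseMat {d : ℕ} (k : ℕ) (X : Matrix (Fin d) (Fin d) ℝ) : Prop :=
  ∃ S T : Finset (Fin d), S.card ≤ k ∧ T.card ≤ k ∧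
    ∀ i j, X i j ≠ 0 → i ∈ S ∧ j ∈ T

/-- `Ψ ∈ ℝ^{m×d}` satisfies the restricted isometry property of order `k` with constant `δ`:
`(1−δ)‖x‖₂² ≤ ‖Ψx‖₂² ≤ (1+δ)‖x‖₂²` for all `k`-sparse vectors `x`. -/
def RIP {m d : ℕ} (k : ℕ) (Ψ : Matrix (Fin m) (Fin d) ℝ) (δ : ℝ) : Prop :=
  ∀ x : Fin d → ℝ, SparseVec k x →
    (1 - δ) * (l2Norm x) ^ 2 ≤ (l2Norm (Ψ.mulVec x)) ^ 2 ∧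
    (l2Norm (Ψ.mulVec x)) ^ 2 ≤ (1 + δ) * (l2Norm x) ^ 2

/-- The squared Frobenius norm, free of the square root. -/
def frobSq {m n : ℕ} (M : Matrix (Fin m) (Fin n) ℝ) : ℝ := ∑ i, ∑ j, (M i j) ^ 2

lemma frobNorm_sq {m n : ℕ} (M : Matrix (Fin m) (Fin n) ℝ) : frobNorm M ^ 2 = frobSq M :=
  Real.sq_sqrt (Finset.sum_nonneg fun _ _ => Finset.sum_nonneg fun _ _ => sq_nonneg _)

lemma l2Norm_sq {n : ℕ} (x : Fin n → ℝ) : l2Norm x ^ 2 = ∑ i, (x i) ^ 2 :=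
  Real.sq_sqrt (Finset.sum_nonneg fun _ _ => sq_nonneg _)

lemma frobSq_transpose {m n : ℕ} (M : Matrix (Fin m) (Fin n) ℝ) : frobSq Mᵀ = frobSq M :=
  Finset.sum_comm

lemma tip_eq_sum {m n : ℕ} (A B : Matrix (Fin m) (Fin n) ℝ) :
    tip A B = ∑ i, ∑ j, A i j * B i j := by
  rw [Finset.sum_comm]
  simp [tip, Matrix.trace, Matrix.mul_apply]

lemma frobSq_lin {m n : ℕ} (A B : Matrix (Fin m) (Fin n) ℝ) (s t : ℝ) :
    frobSq (s • A + t • B) = s ^ 2 * frobSq A + 2 * (s * t) * tip A B + t ^ 2 * frobSq B := by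
  rw [tip_eq_sum]
  simp only [frobSq, Finset.mul_sum, ← Finset.sum_add_distrib]
  refine Finset.sum_congr rfl fun i _ => Finset.sum_congr rfl fun j _ => ?_
  simp only [Matrix.add_apply, Matrix.smul_apply, smul_eq_mul]
  ring

/-- The RIP summed over the columns of `Z`, all of which are supported on `A`. -/
lemma RIP.mul_left {m d n k : ℕ} {Ψ : Matrix (Fin m) (Fin d) ℝ} {δ : ℝ} (h : RIP k Ψ δ)
    (Z : Matrix (Fin d) (Fin n) ℝ) (A : Finset (Fin d)) (hA : A.card ≤ k)
    (hZ : ∀ i j, Z i j ≠ 0 → i ∈ A) :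
    (1 - δ) * frobSq Z ≤ frobSq (Ψ * Z) ∧ frobSq (Ψ * Z) ≤ (1 + δ) * frobSq Z := by
  have key : ∀ j, (1 - δ) * ∑ i, (Z i j) ^ 2 ≤ ∑ i, ((Ψ * Z) i j) ^ 2 ∧
      ∑ i, ((Ψ * Z) i j) ^ 2 ≤ (1 + δ) * ∑ i, (Z i j) ^ 2 := by
    intro j
    have := h (fun i => Z i j) ⟨A, hA, fun i hi => hZ i j hi⟩
    rw [l2Norm_sq, l2Norm_sq] at this
    exact this
  rw [← frobSq_transpose Z, ← frobSq_transpose (Ψ * Z)]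
  simp only [frobSq, Matrix.transpose_apply, Finset.mul_sum] at key ⊢
  exact ⟨Finset.sum_le_sum fun j _ => (key j).1, Finset.sum_le_sum fun j _ => (key j).2⟩

/-- Two-sided compression of a matrix supported on `A × B` is a restricted isometry with squared
constants: the rows of `Ψ Z` are still supported on `B`, so the one-sided bound applies again. -/
lemma RIP.sandwich {m d k : ℕ} {Ψ : Matrix (Fin m) (Fin d) ℝ} {δ : ℝ} (h : RIP k Ψ δ)
    (hδ0 : 0 ≤ δ) (hδ1 : δ ≤ 1) (Z : Matrix (Fin d) (Fin d) ℝ) (A B : Finset (Fin d))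
    (hA : A.card ≤ k) (hB : B.card ≤ k) (hZ : ∀ i j, Z i j ≠ 0 → i ∈ A ∧ j ∈ B) :
    (1 - δ) ^ 2 * frobSq Z ≤ frobSq (Ψ * Z * Ψᵀ) ∧
      frobSq (Ψ * Z * Ψᵀ) ≤ (1 + δ) ^ 2 * frobSq Z := by
  obtain ⟨h1, h2⟩ := h.mul_left Z A hA fun i j hij => (hZ i j hij).1
  have hrow : ∀ j i, (Ψ * Z)ᵀ j i ≠ 0 → j ∈ B := by
    intro j i hij
    by_contra hj
    refine hij ?_
    rw [Matrix.transpose_apply, Matrix.mul_apply]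
    refine Finset.sum_eq_zero fun l _ => ?_
    have : Z l j = 0 := by
      by_contra hl
      exact hj (hZ l j hl).2
    rw [this, mul_zero]
  obtain ⟨h3, h4⟩ := h.mul_left (Ψ * Z)ᵀ B hB hrow
  have e : Ψ * (Ψ * Z)ᵀ = (Ψ * Z * Ψᵀ)ᵀ := by
    rw [Matrix.transpose_mul (Ψ * Z), Matrix.transpose_transpose]
  rw [e, frobSq_transpose, frobSq_transpose] at h3 h4
  constructor
  · nlinarith [mul_le_mul_of_nonneg_left h1 (sub_nonneg.2 hδ1)]
  · nlinarith [mul_le_mul_of_nonneg_left h2 (by linarith : 0 ≤ 1 + δ)]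

lemma eq_zero_of_frobNorm_eq_zero {m n : ℕ} {M : Matrix (Fin m) (Fin n) ℝ}
    (h : frobNorm M = 0) : M = 0 := by
  have h0 : frobSq M = 0 := by rw [← frobNorm_sq, h]; norm_num
  ext i j
  have h1 := (Finset.sum_eq_zero_iff_of_nonneg
    fun i _ => Finset.sum_nonneg fun j _ => sq_nonneg (M i j)).1 h0 i (Finset.mem_univ i)
  have h2 := (Finset.sum_eq_zero_iff_of_nonneg
    fun j _ => sq_nonneg (M i j)).1 h1 j (Finset.mem_univ j)
  simpa using h2

/-- If `Ψ` satisfies the RIP of order `2k` with constant `δ ∈ [0,1]`, then for any pair of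
`k×k`-sparse matrices `X, X'` with disjoint supports,
`|⟨Ψ X Ψᵀ, Ψ X' Ψᵀ⟩| ≤ 2δ‖X‖_F‖X'‖_F`. -/
theorem stmt_3 {m d k : ℕ} (Ψ : Matrix (Fin m) (Fin d) ℝ) (δ : ℝ)
    (hδ0 : 0 ≤ δ) (hδ1 : δ ≤ 1) (hRIP : RIP (2 * k) Ψ δ)
    (X X' : Matrix (Fin d) (Fin d) ℝ)
    (hX : SparseMat k X) (hX' : SparseMat k X')
    (hdisj : ∀ i j, X i j ≠ 0 → X' i j = 0) :
    |tip (Ψ * X * Ψᵀ) (Ψ * X' * Ψᵀ)| ≤ 2 * δ * frobNorm X * frobNorm X' := by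
  obtain ⟨S, T, hS, hT, hXs⟩ := hX
  obtain ⟨S', T', hS', hT', hXs'⟩ := hX'
  have ha0 : 0 ≤ frobNorm X := Real.sqrt_nonneg _
  have hb0 : 0 ≤ frobNorm X' := Real.sqrt_nonneg _
  have hbq := frobNorm_sq X'
  have haq := frobNorm_sq X
  -- When one norm vanishes the rescaling below is degenerate, but both sides are zero.
  rcases ha0.eq_or_lt with ha | ha
  · rw [eq_zero_of_frobNorm_eq_zero ha.symm]
    simp [tip, frobNorm]
  rcases hb0.eq_or_lt with hb | hb
  · rw [eq_zero_of_frobNorm_eq_zero hb.symm]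
    simp [tip, frobNorm]
  generalize frobNorm X = a at *
  generalize frobNorm X' = b at *
  have horth : tip X X' = 0 := by
    rw [tip_eq_sum]
    refine Finset.sum_eq_zero fun i _ => Finset.sum_eq_zero fun j _ => ?_
    by_cases hx : X i j = 0
    · rw [hx, zero_mul]
    · rw [hdisj i j hx, mul_zero]
  have key : ∀ s t : ℝ,
      (1 - δ) ^ 2 * frobSq (s • X + t • X') ≤
          frobSq (s • (Ψ * X * Ψᵀ) + t • (Ψ * X' * Ψᵀ)) ∧
        frobSq (s • (Ψ * X * Ψᵀ) + t • (Ψ * X' * Ψᵀ)) ≤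
          (1 + δ) ^ 2 * frobSq (s • X + t • X') := by
    intro s t
    have e : s • (Ψ * X * Ψᵀ) + t • (Ψ * X' * Ψᵀ) = Ψ * (s • X + t • X') * Ψᵀ := by
      simp [Matrix.mul_add, Matrix.add_mul]
    rw [e]
    refine hRIP.sandwich hδ0 hδ1 _ (S ∪ S') (T ∪ T')
      ((Finset.card_union_le _ _).trans (by omega))
      ((Finset.card_union_le _ _).trans (by omega)) fun i j hij => ?_
    by_cases hx : X i j = 0
    · by_cases hx' : X' i j = 0
      · simp [hx, hx'] at hij
      · exact ⟨Finset.mem_union_right _ (hXs' i j hx').1,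
          Finset.mem_union_right _ (hXs' i j hx').2⟩
    · exact ⟨Finset.mem_union_left _ (hXs i j hx).1,
        Finset.mem_union_left _ (hXs i j hx).2⟩
  obtain ⟨p1, p2⟩ := key b a
  obtain ⟨q1, q2⟩ := key b (-a)
  simp only [frobSq_lin, horth, ← haq, ← hbq] at p1 p2 q1 q2
  generalize tip (Ψ * X * Ψᵀ) (Ψ * X' * Ψᵀ) = c at *
  have hab : 0 < 4 * (a * b) := by positivity
  rw [abs_le]
  constructor
  · refine le_of_mul_le_mul_left ?_ hab
    linarith
  · refine le_of_mul_le_mul_left ?_ hab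
    linarith

end
end

section
/- Let E₁, E₂, …, E_J ∈ ℝ^{d×d} be matrices with pairwise disjoint supports, each having at most k² nonzero entries, and suppose that for every j ≥ 2 one has ‖E_j‖_∞ ≤ (1/k²)‖E_{j−1}‖₁. Then Σ_{j=2}^J ‖E_j‖_F ≤ (1/k)‖Σ_{j=1}^J E_j‖₁. -/
/-!
A matrix with at most `k²` nonzero entries satisfies `‖M‖_F ≤ k ‖M‖_∞` (`frobNorm_le`), so the
decay hypothesis gives `‖E_j‖_F ≤ (1/k) ‖E_{j-1}‖₁` for `j ≥ 2`. Summing over `j` bounds the left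
side by `(1/k) ∑_j ‖E_j‖₁`, and disjointness of the supports makes the `ℓ₁`-norm additive
(`l1Norm_sum`). With the convention `1 / 0 = 0` the argument covers `k = 0` as well.
-/

open Matrix

noncomputable section

/-- The entrywise `ℓ₁`-norm of a real matrix. -/
def l1Norm {m n : ℕ} (M : Matrix (Fin m) (Fin n) ℝ) : ℝ := ∑ i, ∑ j, |M i j|

/-- The largest absolute value among the entries of a real matrix. -/
def linfNorm {m n : ℕ} (M : Matrix (Fin m) (Fin n) ℝ) : ℝ := ⨆ i, ⨆ j, |M i j|

lemma abs_le_linfNorm {m n : ℕ} (M : Matrix (Fin m) (Fin n) ℝ) (i : Fin m) (j : Fin n) :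
    |M i j| ≤ linfNorm M :=
  (le_ciSup (f := fun j => |M i j|) (Set.finite_range _).bddAbove j).trans
    (le_ciSup (f := fun i => ⨆ j, |M i j|) (Set.finite_range _).bddAbove i)

lemma linfNorm_nonneg {m n : ℕ} (M : Matrix (Fin m) (Fin n) ℝ) : 0 ≤ linfNorm M :=
  Real.iSup_nonneg fun _ => Real.iSup_nonneg fun _ => abs_nonneg _

lemma l1Norm_nonneg {m n : ℕ} (M : Matrix (Fin m) (Fin n) ℝ) : 0 ≤ l1Norm M :=
  Finset.sum_nonneg fun _ _ => Finset.sum_nonneg fun _ _ => abs_nonneg _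

lemma frobNorm_le {m n k : ℕ} (M : Matrix (Fin m) (Fin n) ℝ) (s : Finset (Fin m × Fin n))
    (hs : s.card ≤ k ^ 2) (hM : ∀ a b, M a b ≠ 0 → (a, b) ∈ s) :
    frobNorm M ≤ k * linfNorm M := by
  refine Real.sqrt_le_iff.2 ⟨mul_nonneg k.cast_nonneg (linfNorm_nonneg M), ?_⟩
  calc ∑ i, ∑ j, (M i j) ^ 2 = ∑ p : Fin m × Fin n, (M p.1 p.2) ^ 2 :=
        (Fintype.sum_prod_type' fun i j => (M i j) ^ 2).symm
    _ = ∑ p ∈ s, (M p.1 p.2) ^ 2 := by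
        refine (Finset.sum_subset s.subset_univ fun p _ hp => ?_).symm
        by_contra h
        exact hp (hM p.1 p.2 fun h0 => h (by simp [h0]))
    _ ≤ s.card • (linfNorm M) ^ 2 := by
        refine Finset.sum_le_card_nsmul _ _ _ fun p _ => ?_
        rw [← sq_abs]
        exact pow_le_pow_left₀ (abs_nonneg _) (abs_le_linfNorm M p.1 p.2) 2
    _ ≤ (k * linfNorm M) ^ 2 := by
        rw [nsmul_eq_mul, mul_pow]
        exact mul_le_mul_of_nonneg_right (by exact_mod_cast hs) (sq_nonneg _)

lemma l1Norm_sum {m n : ℕ} (t : Finset ℕ) (E : ℕ → Matrix (Fin m) (Fin n) ℝ)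
    (hdisj : ∀ j ∈ t, ∀ j' ∈ t, j ≠ j' → ∀ a b, E j a b ≠ 0 → E j' a b = 0) :
    l1Norm (∑ j ∈ t, E j) = ∑ j ∈ t, l1Norm (E j) := by
  -- At each position at most one summand is nonzero, so the absolute value is additive there.
  have key : ∀ a b, |(∑ j ∈ t, E j) a b| = ∑ j ∈ t, |E j a b| := by
    intro a b
    rw [Matrix.sum_apply]
    by_cases h : ∃ j ∈ t, E j a b ≠ 0
    · obtain ⟨j, hj, hne⟩ := h
      have h0 : ∀ j' ∈ t, j' ≠ j → E j' a b = 0 := fun j' hj' hjj =>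
        hdisj j hj j' hj' hjj.symm a b hne
      rw [Finset.sum_eq_single_of_mem j hj h0,
        Finset.sum_eq_single_of_mem j hj fun j' hj' hjj => by rw [h0 j' hj' hjj, abs_zero]]
    · push Not at h
      rw [Finset.sum_eq_zero h, Finset.sum_eq_zero fun j hj => by rw [h j hj, abs_zero], abs_zero]
  simp only [l1Norm, key]
  rw [Finset.sum_comm (s := t)]
  exact Finset.sum_congr rfl fun a _ => Finset.sum_comm

/-- Let `E₁, …, E_J ∈ ℝ^{d×d}` have pairwise disjoint supports, each with at most `k²`
nonzero entries, and suppose `‖E_j‖_∞ ≤ (1/k²)‖E_{j−1}‖₁` for every `j ≥ 2`.  Then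
`Σ_{j=2}^J ‖E_j‖_F ≤ (1/k)‖Σ_{j=1}^J E_j‖₁`. -/
theorem stmt_8 {d k : ℕ} (J : ℕ) (E : ℕ → Matrix (Fin d) (Fin d) ℝ)
    (hdisj : ∀ j ∈ Finset.Icc 1 J, ∀ j' ∈ Finset.Icc 1 J, j ≠ j' →
      ∀ a b, E j a b ≠ 0 → E j' a b = 0)
    (hsparse : ∀ j ∈ Finset.Icc 1 J,
      ∃ s : Finset (Fin d × Fin d), s.card ≤ k ^ 2 ∧ ∀ a b, E j a b ≠ 0 → (a, b) ∈ s)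
    (hdecay : ∀ j ∈ Finset.Icc 2 J, linfNorm (E j) ≤ (1 / (k : ℝ) ^ 2) * l1Norm (E (j - 1))) :
    ∑ j ∈ Finset.Icc 2 J, frobNorm (E j) ≤
      (1 / (k : ℝ)) * l1Norm (∑ j ∈ Finset.Icc 1 J, E j) := by
  rw [l1Norm_sum _ E hdisj]
  have hstep : ∀ j ∈ Finset.Icc 2 J, frobNorm (E j) ≤ (1 / (k : ℝ)) * l1Norm (E (j - 1)) := by
    intro j hj
    have hjJ := Finset.mem_Icc.1 hj
    obtain ⟨s, hs, hE⟩ := hsparse j (Finset.mem_Icc.2 ⟨by omega, hjJ.2⟩)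
    -- This identity also holds for `k = 0`, where both sides vanish.
    have hk : (k : ℝ) * (1 / (k : ℝ) ^ 2) = 1 / (k : ℝ) := by
      rcases eq_or_ne (k : ℝ) 0 with h | h
      · simp [h]
      · field_simp
    calc frobNorm (E j) ≤ k * linfNorm (E j) := frobNorm_le _ s hs hE
      _ ≤ k * ((1 / (k : ℝ) ^ 2) * l1Norm (E (j - 1))) :=
          mul_le_mul_of_nonneg_left (hdecay j hj) k.cast_nonneg
      _ = (1 / (k : ℝ)) * l1Norm (E (j - 1)) := by rw [← mul_assoc, hk]
  refine (Finset.sum_le_sum hstep).trans ?_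
  rw [← Finset.mul_sum]
  refine mul_le_mul_of_nonneg_left ?_ (by positivity)
  have hinj : Set.InjOn (fun j : ℕ => j - 1) (Finset.Icc 2 J : Finset ℕ) := by
    intro a ha b hb hab
    simp only [Finset.coe_Icc, Set.mem_Icc] at ha hb hab
    omega
  rw [← Finset.sum_image (f := fun j => l1Norm (E j)) hinj]
  refine Finset.sum_le_sum_of_subset_of_nonneg ?_ fun j _ _ => l1Norm_nonneg _
  intro j hj
  obtain ⟨i, hi, rfl⟩ := Finset.mem_image.1 hj
  simp only [Finset.mem_Icc] at hi ⊢
  omega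

end
end
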